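/- Let p be a prime, N ≥ 1, let 𝔩(ξ) ∈ ℤ_p[ξ_1,…,ξ_N] be an elliptic polynomial of degree d, and let α > 0, β > 0, m > 0 be real numbers. Then there exist positive constants C_0(α,β,m) and C_1(α,β,m) such that C_0(α,β,m)·[ξ]_p^{αβd} ≤ (|𝔩(ξ)|_p^{α} + m²)^{β} ≤ C_1(α,β,m)·[ξ]_p^{αβd} for all ξ ∈ ℚ_p^N, where [ξ]_p := max(1, ‖ξ‖_p). -/

import Mathlib

open MvPolynomial

theorem aux_bounds
    (p : ℕ) [Fact p.Prime] (N : ℕ) (hN : 1 ≤ N)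
    (d : ℕ) (hd : 1 ≤ d) (L : MvPolynomial (Fin N) ℤ_[p])
    (hhom : L.IsHomogeneous d)
    (hell : ∀ ξ : Fin N → ℚ_[p], eval₂ PadicInt.Coe.ringHom ξ L = 0 ↔ ξ = 0) :
    ∃ c C : ℝ, 0 < c ∧ 0 < C ∧ ∀ ξ : Fin N → ℚ_[p],
      c * ‖ξ‖ ^ d ≤ ‖eval₂ PadicInt.Coe.ringHom ξ L‖ ∧
      ‖eval₂ PadicInt.Coe.ringHom ξ L‖ ≤ C * ‖ξ‖ ^ d := by
  have hcont : Continuous fun ξ : Fin N → ℚ_[p] => ‖eval₂ PadicInt.Coe.ringHom ξ L‖ := by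
    have h : (fun ξ : Fin N → ℚ_[p] => ‖eval₂ PadicInt.Coe.ringHom ξ L‖)
        = fun ξ => ‖eval ξ (map PadicInt.Coe.ringHom L)‖ := by
      funext ξ
      rw [eval_map]
    rw [h]
    exact (MvPolynomial.continuous_eval _).norm
  have : Nonempty (Fin N) := ⟨⟨0, hN⟩⟩
  have hK : IsCompact (Metric.sphere (0 : Fin N → ℚ_[p]) 1) := isCompact_sphere _ _
  have hne : (Metric.sphere (0 : Fin N → ℚ_[p]) 1).Nonempty :=
    ⟨fun _ => 1, by simp [pi_norm_const]⟩
  obtain ⟨x, hx, hxm⟩ := hK.exists_isMinOn hne hcont.continuousOn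
  obtain ⟨y, hy, hym⟩ := hK.exists_isMaxOn hne hcont.continuousOn
  have hpos : ∀ z ∈ Metric.sphere (0 : Fin N → ℚ_[p]) 1,
      0 < ‖eval₂ PadicInt.Coe.ringHom z L‖ := by
    intro z hz
    rw [norm_pos_iff]
    intro h
    rw [hell] at h
    simp [h] at hz
  refine ⟨_, _, hpos x hx, hpos y hy, fun ξ => ?_⟩
  by_cases h0 : ξ = 0
  · have h1 := (hell ξ).2 h0
    rw [h1, h0]
    have : d ≠ 0 := by omega
    simp [this]
  obtain ⟨i, hi⟩ : ∃ i, ‖ξ i‖ = ‖ξ‖ := by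
    obtain ⟨i, hi⟩ := Finite.exists_max (fun i => ‖ξ i‖)
    exact ⟨i, le_antisymm (norm_le_pi_norm ξ i)
      ((pi_norm_le_iff_of_nonneg (norm_nonneg _)).2 hi)⟩
  have hn : 0 < ‖ξ‖ := norm_pos_iff.2 h0
  have hi0 : ξ i ≠ 0 := by
    rw [← norm_pos_iff, hi]; exact hn
  set z : Fin N → ℚ_[p] := (ξ i)⁻¹ • ξ with hz
  have hzs : z ∈ Metric.sphere (0 : Fin N → ℚ_[p]) 1 := by
    rw [mem_sphere_zero_iff_norm, hz, norm_smul, norm_inv, hi]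
    exact inv_mul_cancel₀ hn.ne'
  have hξ : ξ = ξ i • z := by rw [hz, smul_inv_smul₀ hi0]
  have hsc : ‖eval₂ PadicInt.Coe.ringHom ξ L‖
      = ‖eval₂ PadicInt.Coe.ringHom z L‖ * ‖ξ‖ ^ d := by
    have : eval₂ PadicInt.Coe.ringHom ξ L
        = (ξ i) ^ d * eval₂ PadicInt.Coe.ringHom z L := by
      conv_lhs => rw [hξ]
      rw [eval₂_eq, eval₂_eq, Finset.mul_sum]
      refine Finset.sum_congr rfl fun e he => ?_
      have hde : ∑ j ∈ e.support, e j = d := by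
        have := hhom (mem_support_iff.1 he)
        rw [← this]
        simp [Finsupp.weight_apply, Finsupp.sum]
      simp only [Pi.smul_apply, smul_eq_mul, mul_pow, Finset.prod_mul_distrib,
        Finset.prod_pow_eq_pow_sum, hde]
      ring
    rw [this, norm_mul, norm_pow, hi, mul_comm]
  rw [hsc]
  have h1 := hxm hzs
  have h2 := hym hzs
  simp only [Set.mem_setOf_eq] at h1 h2
  constructor <;> gcongr

/-- For an elliptic polynomial `L` of degree `d` and reals `α, β, m > 0`,
there exist positive constants `C₀(α,β,m)`, `C₁(α,β,m)` such that
`C₀ [ξ]_p^{αβd} ≤ (|L(ξ)|_p^α + m²)^β ≤ C₁ [ξ]_p^{αβd}` for all `ξ ∈ ℚ_p^N`,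
where `[ξ]_p = max(1, ‖ξ‖_p)`. -/
theorem elliptic_symbol_rpow_bounds
    (p : ℕ) [Fact p.Prime] (N : ℕ) (hN : 1 ≤ N)
    (d : ℕ) (hd : 1 ≤ d) (L : MvPolynomial (Fin N) ℤ_[p])
    (hhom : L.IsHomogeneous d)
    (hell : ∀ ξ : Fin N → ℚ_[p], eval₂ PadicInt.Coe.ringHom ξ L = 0 ↔ ξ = 0)
    (α β m : ℝ) (hα : 0 < α) (hβ : 0 < β) (hm : 0 < m) :
    ∃ C₀ C₁ : ℝ, 0 < C₀ ∧ 0 < C₁ ∧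
      ∀ ξ : Fin N → ℚ_[p],
        C₀ * (max 1 ‖ξ‖) ^ (α * β * (d : ℝ)) ≤
            (‖eval₂ PadicInt.Coe.ringHom ξ L‖ ^ α + m ^ 2) ^ β ∧
        (‖eval₂ PadicInt.Coe.ringHom ξ L‖ ^ α + m ^ 2) ^ β ≤
            C₁ * (max 1 ‖ξ‖) ^ (α * β * (d : ℝ)) := by
  obtain ⟨c, C, hc, hC, H⟩ := aux_bounds p N hN d hd L hhom hell
  have hcα : 0 < c ^ α := Real.rpow_pos_of_pos hc α
  have hCα : 0 < C ^ α := Real.rpow_pos_of_pos hC α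
  have hm2 : 0 < m ^ 2 := by positivity
  have hmin : 0 < min (c ^ α) (m ^ 2) := lt_min hcα hm2
  refine ⟨(min (c ^ α) (m ^ 2)) ^ β, (C ^ α + m ^ 2) ^ β, by positivity, by positivity,
    fun ξ => ?_⟩
  obtain ⟨H1, H2⟩ := H ξ
  have hX1 : 1 ≤ max 1 ‖ξ‖ := le_max_left _ _
  have hX0 : 0 < max 1 ‖ξ‖ := by linarith
  have key : ∀ K : ℝ, 0 < K → ∀ t : ℝ, 0 ≤ t → (K * t ^ d) ^ α = K ^ α * (t ^ d) ^ α :=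
    fun K hK t ht => Real.mul_rpow hK.le (by positivity)
  have hpow : (max 1 ‖ξ‖) ^ (α * β * (d : ℝ)) = (((max 1 ‖ξ‖) ^ d) ^ α) ^ β := by
    rw [← Real.rpow_natCast, ← Real.rpow_mul hX0.le, ← Real.rpow_mul hX0.le]
    congr 1; ring
  have hY1 : 1 ≤ ((max 1 ‖ξ‖) ^ d) ^ α := Real.one_le_rpow (one_le_pow₀ hX1) hα.le
  have hF := norm_nonneg (eval₂ PadicInt.Coe.ringHom ξ L)
  set F := ‖eval₂ PadicInt.Coe.ringHom ξ L‖
  rw [hpow]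
  constructor
  · rw [← Real.mul_rpow hmin.le (by linarith)]
    refine Real.rpow_le_rpow (mul_nonneg hmin.le (by linarith)) ?_ hβ.le
    rcases le_total ‖ξ‖ 1 with h | h
    · rw [max_eq_left h]
      have : 0 ≤ F ^ α := Real.rpow_nonneg hF α
      have := min_le_right (c ^ α) (m ^ 2)
      simp only [one_pow, Real.one_rpow, mul_one]
      linarith
    · rw [max_eq_right h]
      have h1 : (c * ‖ξ‖ ^ d) ^ α ≤ F ^ α := Real.rpow_le_rpow (by positivity) H1 hα.le
      rw [key c hc _ (norm_nonneg _)] at h1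
      have h2 : min (c ^ α) (m ^ 2) * (‖ξ‖ ^ d) ^ α ≤ c ^ α * (‖ξ‖ ^ d) ^ α :=
        mul_le_mul_of_nonneg_right (min_le_left _ _) (by positivity)
      linarith
  · rw [← Real.mul_rpow (by positivity) (by linarith)]
    refine Real.rpow_le_rpow (by positivity) ?_ hβ.le
    have h1 : F ^ α ≤ (C * (max 1 ‖ξ‖) ^ d) ^ α := by
      refine Real.rpow_le_rpow hF (H2.trans ?_) hα.le
      gcongr
      exact le_max_right _ _
    rw [key C hC _ hX0.le] at h1
    nlinarith
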